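/- Let λ ∈ ℝ and define H_λ(x) = (24 − λx) ln x + [(9λ − 172)x + 12λ − 256] ln(x+1) + 4[(37 − 2λ)x − 3λ + 61] ln(x+2) and G_λ(x) = ln Γ(x) + x + 1/(12(1+x)²) + (λ − 48)/(48(1+x)) + H_λ(x)/24. Then lim_{x→∞} G_λ(x) = (124 + 12 ln(2π) − 7λ)/24. -/

import Mathlib

/-- `H_λ(x)` as in the paper. -/
noncomputable def H (lam x : ℝ) : ℝ :=
  (24 - lam * x) * Real.log x +
    ((9 * lam - 172) * x + 12 * lam - 256) * Real.log (x + 1) +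
    4 * ((37 - 2 * lam) * x - 3 * lam + 61) * Real.log (x + 2)

/-- `G_λ(x)` as in the paper. -/
noncomputable def G (lam x : ℝ) : ℝ :=
  Real.log (Real.Gamma x) + x + 1 / (12 * (1 + x) ^ 2) +
    (lam - 48) / (48 * (1 + x)) + H lam x / 24

open Filter Topology in
theorem S_seq : Tendsto (fun n : ℕ => Real.log (Real.Gamma n) - ((n:ℝ) - 1/2) * Real.log n + n)
    atTop (𝓝 (Real.log (2 * Real.pi) / 2)) := by
  have h := (Real.continuousAt_log (by positivity : √Real.pi ≠ 0)).tendsto.comp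
    Stirling.tendsto_stirlingSeq_sqrt_pi
  have h2 := h.add_const (Real.log 2 / 2)
  have e : Real.log √Real.pi + Real.log 2 / 2 = Real.log (2 * Real.pi) / 2 := by
    rw [Real.log_sqrt Real.pi_pos.le, Real.log_mul (by norm_num) Real.pi_pos.ne']; ring
  rw [e] at h2
  refine h2.congr' ?_
  filter_upwards [eventually_ge_atTop 1] with n hn
  have hn0 : (0:ℝ) < n := by exact_mod_cast hn
  simp only [Function.comp]
  rw [Stirling.log_stirlingSeq_formula]
  have hG : Real.log (n.factorial : ℝ) = Real.log n + Real.log (Real.Gamma n) := by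
    rw [← Real.Gamma_nat_eq_factorial, Real.Gamma_add_one hn0.ne',
      Real.log_mul hn0.ne' (Real.Gamma_pos_of_pos hn0).ne']
  rw [hG, Real.log_mul (by norm_num) hn0.ne', Real.log_div hn0.ne' (Real.exp_pos 1).ne',
    Real.log_exp]
  ring

theorem S_diff (n : ℕ) (hn : 2 ≤ n) (t : ℝ) (h0 : 0 ≤ t) (h1 : t ≤ 1) :
    |(Real.log (Real.Gamma (n + t)) - ((n + t) - 1/2) * Real.log (n + t) + (n + t)) -
     (Real.log (Real.Gamma n) - ((n:ℝ) - 1/2) * Real.log n + n)| ≤ 2 / ((n:ℝ) - 1) := by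
  have hn2 : (2:ℝ) ≤ n := by exact_mod_cast hn
  have hm : (0:ℝ) < n - 1 := by linarith
  have hn0 : (0:ℝ) < n := by linarith
  have hy : (0:ℝ) < n + t := by linarith
  rcases h0.eq_or_lt with rfl | hp
  · simp only [add_zero, sub_self, abs_zero]; positivity
  have feq : ∀ {y : ℝ}, 0 < y → (Real.log ∘ Real.Gamma) (y + 1) =
      (Real.log ∘ Real.Gamma) y + Real.log y := by
    intro y hy
    simp only [Function.comp]
    rw [Real.Gamma_add_one hy.ne', Real.log_mul hy.ne' (Real.Gamma_pos_of_pos hy).ne', add_comm]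
  have U := Real.BohrMollerup.f_add_nat_le Real.convexOn_log_Gamma feq (by omega : n ≠ 0) hp h1
  have L := Real.BohrMollerup.f_add_nat_ge Real.convexOn_log_Gamma feq hn hp
  simp only [Function.comp] at U L
  set A := Real.log (Real.Gamma (n + t))
  set B := Real.log (Real.Gamma n)
  have l1 : Real.log (n + t) - Real.log n ≤ t / n := by
    rw [← Real.log_div hy.ne' hn0.ne']
    have := Real.log_le_sub_one_of_pos (div_pos hy hn0)
    have e : (n + t) / n - 1 = t / n := by field_simp; ring
    linarith
  have l2 : t / (n + t) ≤ Real.log (n + t) - Real.log n := by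
    rw [← Real.log_div hy.ne' hn0.ne']
    have := Real.one_sub_inv_le_log_of_pos (div_pos hy hn0)
    have e : 1 - ((n + t) / n)⁻¹ = t / (n + t) := by field_simp; ring
    linarith
  have l3 : Real.log n - Real.log (n - 1) ≤ 1 / ((n:ℝ) - 1) := by
    rw [← Real.log_div hn0.ne' hm.ne']
    have := Real.log_le_sub_one_of_pos (div_pos hn0 hm)
    have e : (n:ℝ) / (n - 1) - 1 = 1 / ((n:ℝ) - 1) := by field_simp; ring
    linarith
  have hc : (0:ℝ) ≤ n + t - 1/2 := by linarith
  have m1 := mul_le_mul_of_nonneg_left l1 hc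
  have m2 := mul_le_mul_of_nonneg_left l2 hc
  have m3 := mul_le_mul_of_nonneg_left l3 h0
  have i0 : t * (1 / ((n:ℝ) - 1)) ≤ 1 / ((n:ℝ) - 1) :=
    mul_le_of_le_one_left (by positivity) h1
  have i1 : (n + t - 1/2) * (t / n) ≤ t + 1 / ((n:ℝ) - 1) := by
    have a : (n + t - 1/2) * (t / n) = t + (t - 1/2) * t / n := by field_simp; ring
    have b : (t - 1/2) * t / n ≤ 1 / n := by gcongr; nlinarith
    have c : 1 / (n:ℝ) ≤ 1 / ((n:ℝ) - 1) := by gcongr; linarith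
    linarith
  have i2 : t - 2 / ((n:ℝ) - 1) ≤ (n + t - 1/2) * (t / (n + t)) := by
    have a : (n + t - 1/2) * (t / (n + t)) = t - (t/2) / (n + t) := by field_simp
    have b : (t/2) / (n + t) ≤ 2 / ((n:ℝ) - 1) := by gcongr <;> linarith
    linarith
  have e2 : 2 / ((n:ℝ) - 1) = 1 / ((n:ℝ) - 1) + 1 / ((n:ℝ) - 1) := by ring
  rw [abs_le]
  constructor
  · nlinarith
  · nlinarith

open Filter Topology in
theorem S_real : Tendsto (fun y : ℝ => Real.log (Real.Gamma y) - (y - 1/2) * Real.log y + y)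
    atTop (𝓝 (Real.log (2 * Real.pi) / 2)) := by
  have h := S_seq.comp (tendsto_nat_floor_atTop (α := ℝ))
  refine h.congr_dist ?_
  have hz : Tendsto (fun y : ℝ => 2 / ((⌊y⌋₊ : ℝ) - 1)) atTop (𝓝 0) := by
    refine Tendsto.div_atTop tendsto_const_nhds ?_
    exact tendsto_atTop_add_const_right _ _
      (tendsto_natCast_atTop_atTop.comp (tendsto_nat_floor_atTop (α := ℝ)))
  refine squeeze_zero' (Eventually.of_forall fun _ => dist_nonneg) ?_ hz
  filter_upwards [eventually_ge_atTop 2] with y hy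
  have a := S_diff ⌊y⌋₊ (Nat.le_floor (by exact_mod_cast hy)) (y - ⌊y⌋₊)
    (by linarith [Nat.floor_le (by linarith : 0 ≤ y)]) (by linarith [Nat.lt_floor_add_one y])
  rw [add_sub_cancel] at a
  rw [dist_comm, Real.dist_eq]
  exact a

open Filter Topology in
theorem log_lim (c : ℝ) : Tendsto (fun x : ℝ => x * (Real.log (x + c) - Real.log x))
    atTop (𝓝 c) := by
  refine (Real.tendsto_mul_log_one_add_div_atTop c).congr' ?_
  filter_upwards [eventually_gt_atTop 0, eventually_gt_atTop (-c)] with x hx hc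
  rw [← Real.log_div (by linarith) hx.ne']
  congr 2
  field_simp

open Filter Topology in
theorem log_lim0 (c : ℝ) : Tendsto (fun x : ℝ => Real.log (x + c) - Real.log x)
    atTop (𝓝 0) := by
  have h := (log_lim c).mul tendsto_inv_atTop_zero
  rw [mul_zero] at h
  refine h.congr' ?_
  filter_upwards [eventually_gt_atTop 0] with x hx
  field_simp

open Filter Topology in
theorem stmt_11 (lam : ℝ) :
    Filter.Tendsto (G lam) Filter.atTop
      (nhds ((124 + 12 * Real.log (2 * Real.pi) - 7 * lam) / 24)) := by
  have hx : Tendsto (fun x : ℝ => 1 + x) atTop atTop := tendsto_atTop_add_const_left _ _ tendsto_id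
  have p1 : Tendsto (fun x : ℝ => 1 / (12 * (1 + x) ^ 2)) atTop (𝓝 0) :=
    Tendsto.div_atTop tendsto_const_nhds
      (((tendsto_pow_atTop two_ne_zero).comp hx).const_mul_atTop (by norm_num))
  have p2 : Tendsto (fun x : ℝ => (lam - 48) / (48 * (1 + x))) atTop (𝓝 0) :=
    Tendsto.div_atTop tendsto_const_nhds (hx.const_mul_atTop (by norm_num))
  have key := (((((S_real.add p1).add p2).add ((log_lim 1).const_mul ((9 * lam - 172) / 24))).add
    ((log_lim 2).const_mul (4 * (37 - 2 * lam) / 24))).add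
    ((log_lim0 1).const_mul ((12 * lam - 256) / 24))).add
    ((log_lim0 2).const_mul (4 * (61 - 3 * lam) / 24))
  convert key using 2
  · unfold G H; ring
  · ring
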